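/- Let h and k be natural numbers, let G be a simple graph with no K_h minor, let X, Y ⊆ V(G), and suppose G contains k pairwise disjoint X-Y-paths. Then G contains at least k/(2(h−1)) pairwise non-adjacent X-Y-paths. -/

import Mathlib

open SimpleGraph

universe u

variable {V : Type u}

/-- A packaged walk in `G`: a pair of endpoints together with a walk between them. -/
abbrev PathPkg (G : SimpleGraph V) : Type u := Σ x : V, Σ y : V, G.Walk x y

/-- The set of vertices of a packaged walk. -/
def pkgSupport {G : SimpleGraph V} (p : PathPkg G) : Set V := {x | x ∈ p.2.2.support}

/-- The set of edges of a packaged walk. -/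
def pkgEdges {G : SimpleGraph V} (p : PathPkg G) : Set (Sym2 V) := {e | e ∈ p.2.2.edges}

/-- `p` is an `X`-`Y`-path: a path whose first endpoint lies in `X` and whose
second endpoint lies in `Y`. -/
def IsXYPath (G : SimpleGraph V) (X Y : Set V) (p : PathPkg G) : Prop :=
  p.2.2.IsPath ∧ p.1 ∈ X ∧ p.2.1 ∈ Y

/-- Two packaged walks are (vertex-)disjoint. -/
def PkgDisjoint {G : SimpleGraph V} (p q : PathPkg G) : Prop :=
  ∀ x, x ∈ pkgSupport p → x ∉ pkgSupport q

/-- Two packaged walks are non-adjacent: they are vertex-disjoint and no edge of `G`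
joins a vertex of one to a vertex of the other. -/
def PkgNonAdj (G : SimpleGraph V) (p q : PathPkg G) : Prop :=
  ∀ a, a ∈ pkgSupport p → ∀ b, b ∈ pkgSupport q → a ≠ b ∧ ¬ G.Adj a b

/-- `Z` separates `X` and `Y` in `G`: every `X`-`Y`-path meets `Z`. -/
def XYSeparates (G : SimpleGraph V) (X Y Z : Set V) : Prop :=
  ∀ p : PathPkg G, IsXYPath G X Y p → ∃ z, z ∈ Z ∧ z ∈ pkgSupport p

/-- `M` is an induced matching of `G`: a set of edges of `G` such that any two distinct
edges of `M` are at distance at least `2` in `G` (no endpoint of one equals or is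
adjacent to an endpoint of the other). -/
def IsInducedMatching (G : SimpleGraph V) (M : Set (Sym2 V)) : Prop :=
  M ⊆ G.edgeSet ∧
    ∀ e₁, e₁ ∈ M → ∀ e₂, e₂ ∈ M → e₁ ≠ e₂ →
      ∀ a, a ∈ e₁ → ∀ b, b ∈ e₂ → a ≠ b ∧ ¬ G.Adj a b

/-- `G` admits a partition of its edge set into `n` induced matchings
(a strong edge colouring with `n` colours). -/
def HasStrongEdgeColoring (G : SimpleGraph V) (n : ℕ) : Prop :=
  ∃ M : Fin n → Set (Sym2 V),
    (∀ i, IsInducedMatching G (M i)) ∧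
    (Pairwise fun i j => Disjoint (M i) (M j)) ∧
    (⋃ i, M i) = G.edgeSet

/-- The strong chromatic index of `G`: the least number of induced matchings into
which the edge set of `G` can be partitioned. -/
noncomputable def strongChromaticIndex (G : SimpleGraph V) : ℕ :=
  sInf {n | HasStrongEdgeColoring G n}

/-- `G` contains the complete graph `K_r` as a topological minor: there are `r` distinct
branch vertices joined pairwise by internally disjoint paths whose internal vertices
avoid all branch vertices. -/
def HasTopKMinor (G : SimpleGraph V) (r : ℕ) : Prop :=
  ∃ (f : Fin r → V) (P : (i j : Fin r) → i < j → G.Walk (f i) (f j)),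
    Function.Injective f ∧
    (∀ i j hij, (P i j hij).IsPath) ∧
    (∀ i j hij x, x ∈ (P i j hij).support → x ≠ f i → x ≠ f j → ∀ l, x ≠ f l) ∧
    (∀ i j hij i' j' hij', (i, j) ≠ (i', j') →
      ∀ x, x ∈ (P i j hij).support → x ∈ (P i' j' hij').support →
        (x = f i ∨ x = f j) ∧ (x = f i' ∨ x = f j'))

/-- `G` contains the complete graph `K_n` as a minor, witnessed by `n` nonempty,
pairwise disjoint, connected branch sets joined pairwise by edges. -/
def HasKMinor (G : SimpleGraph V) (n : ℕ) : Prop :=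
  ∃ B : Fin n → Set V,
    (∀ i, (B i).Nonempty) ∧
    (∀ i, (G.induce (B i)).Connected) ∧
    (Pairwise fun i j => Disjoint (B i) (B j)) ∧
    (∀ i j, i ≠ j → ∃ a ∈ B i, ∃ b ∈ B j, G.Adj a b)

/-!
Contract each path to a vertex: the contact graph of the paths on `Fin k` again has no `K_h` minor,
and an independent set of it is a family of pairwise non-adjacent paths. So it suffices to apply the
Duchet–Meyniel bound `|V| ≤ 2 (h - 1) α`.

For that bound, grow a connected set `D`, half of which is independent, by repeatedly adding a
vertex `v` at distance two from `D` together with a common neighbour of `v` and `D`. When this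
stops, the closed neighbourhood `M` of `D` has no edges to the rest of the graph. As `D` is
connected and dominates `M`, the graph on `M \ D` has no `K_{h-1}` minor, so induction handles
`M \ D` and the complement of `M`.
-/

section Connectivity

variable {ι : Type*} {G : SimpleGraph V}

lemma induce_insert_connected {D : Set V} {u d : V} (hD : (G.induce D).Connected)
    (hd : d ∈ D) (hud : G.Adj u d) : (G.induce (insert u D)).Connected := by
  have hunion : {u, d} ∪ D = insert u D := by
    rw [Set.insert_union, Set.singleton_union, Set.insert_eq_of_mem hd]
  rw [← hunion]
  exact induce_union_connected (induce_pair_connected_of_adj hud).preconnected hD.preconnected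
    ⟨d, by simp, hd⟩

/-- The contact graph of a family of vertex sets, obtained from `G` by contracting each of them to
a vertex: two distinct indices are adjacent when an edge of `G` joins the corresponding sets. -/
def contactGraph (G : SimpleGraph V) (s : ι → Set V) : SimpleGraph ι where
  Adj i j := i ≠ j ∧ ∃ a ∈ s i, ∃ b ∈ s j, G.Adj a b
  symm := ⟨fun _ _ ⟨hij, a, ha, b, hb, hab⟩ => ⟨hij.symm, b, hb, a, ha, hab.symm⟩⟩
  loopless := ⟨fun _ hii => hii.1 rfl⟩

lemma reachable_induce_biUnion_of_walk_contactGraph {s : ι → Set V}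
    (hs : ∀ i, (G.induce (s i)).Connected) {B : Set ι} {i j : B}
    (w : ((contactGraph G s).induce B).Walk i j) {a b : ⋃ i ∈ B, s i}
    (ha : ↑a ∈ s i) (hb : ↑b ∈ s j) : (G.induce (⋃ i ∈ B, s i)).Reachable a b := by
  have reachable_of_mem (l : B) {x y : ⋃ i ∈ B, s i} (hx : ↑x ∈ s l) (hy : ↑y ∈ s l) :
      (G.induce (⋃ i ∈ B, s i)).Reachable x y :=
    ((hs l).preconnected ⟨x, hx⟩ ⟨y, hy⟩).map
      (induceHomOfLE G (Set.subset_biUnion_of_mem l.2)).toHom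
  induction w generalizing a with
  | nil => exact reachable_of_mem _ ha hb
  | @cons i l j hil _ ih =>
    obtain ⟨-, c, hc, d, hd, hcd⟩ := hil
    let c' : ⋃ i ∈ B, s i := ⟨c, Set.mem_biUnion i.2 hc⟩
    let d' : ⋃ i ∈ B, s i := ⟨d, Set.mem_biUnion l.2 hd⟩
    have hcd' : (G.induce (⋃ i ∈ B, s i)).Adj c' d' := hcd
    exact (reachable_of_mem i ha (y := c') hc).trans (hcd'.reachable.trans (ih hd hb))

lemma induce_biUnion_connected_of_contactGraph {s : ι → Set V}
    (hs : ∀ i, (G.induce (s i)).Connected) {B : Set ι}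
    (hB : ((contactGraph G s).induce B).Connected) :
    (G.induce (⋃ i ∈ B, s i)).Connected := by
  rw [connected_iff]
  constructor
  · rintro ⟨a, ha⟩ ⟨b, hb⟩
    obtain ⟨i, hi, hai⟩ := Set.mem_iUnion₂.1 ha
    obtain ⟨j, hj, hbj⟩ := Set.mem_iUnion₂.1 hb
    obtain ⟨w⟩ := hB.preconnected ⟨i, hi⟩ ⟨j, hj⟩
    exact reachable_induce_biUnion_of_walk_contactGraph hs w hai hbj
  · obtain ⟨i, hi⟩ := hB.nonempty
    obtain ⟨a, ha⟩ := (hs i).nonempty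
    exact ⟨a, Set.mem_biUnion hi ha⟩

end Connectivity

section Minor

variable {ι : Type*} {G : SimpleGraph V} {n : ℕ}

lemma hasKMinor_zero (G : SimpleGraph V) : HasKMinor G 0 :=
  ⟨Fin.elim0, fun i => i.elim0, fun i => i.elim0, fun i => i.elim0, fun i => i.elim0⟩

lemma HasKMinor.of_contactGraph {s : ι → Set V} (hs : ∀ i, (G.induce (s i)).Connected)
    (hdisj : Pairwise fun i j => Disjoint (s i) (s j)) (hminor : HasKMinor (contactGraph G s) n) :
    HasKMinor G n := by
  obtain ⟨B, -, hconn, hBdisj, hadj⟩ := hminor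
  have hconn' i := induce_biUnion_connected_of_contactGraph hs (hconn i)
  refine ⟨fun i => ⋃ l ∈ B i, s l, fun i => Set.nonempty_coe_sort.1 (hconn' i).nonempty,
    hconn', fun i j hij => ?_, fun i j hij => ?_⟩
  · simp only [Set.disjoint_iUnion_left, Set.disjoint_iUnion_right]
    exact fun l' hl' l hl => hdisj ((hBdisj hij).ne_of_mem hl hl')
  · obtain ⟨l, hl, l', hl', -, a, ha, b, hb, hab⟩ := hadj i j hij
    exact ⟨a, Set.mem_biUnion hl ha, b, Set.mem_biUnion hl' hb, hab⟩

/-- `G` has a `K_n` minor all of whose branch sets lie in `A`, i.e. the subgraph of `G` induced on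
`A` has a `K_n` minor. The branch sets are kept as sets of vertices of `G`, so that passing to a
smaller `A` needs no change of vertex type. -/
def HasKMinorIn (G : SimpleGraph V) (A : Set V) (n : ℕ) : Prop :=
  ∃ B : Fin n → Set V, (∀ i, B i ⊆ A) ∧ (∀ i, (G.induce (B i)).Connected) ∧
    Pairwise fun i j => Disjoint (B i) (B j) ∧ ∃ a ∈ B i, ∃ b ∈ B j, G.Adj a b

lemma HasKMinorIn.hasKMinor {A : Set V} (hA : HasKMinorIn G A n) : HasKMinor G n := by
  obtain ⟨B, -, hconn, hpair⟩ := hA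
  exact ⟨B, fun i => Set.nonempty_coe_sort.1 (hconn i).nonempty, hconn,
    fun _ _ hij => (hpair hij).1, fun _ _ hij => (hpair hij).2⟩

lemma HasKMinorIn.mono {A A' : Set V} (hAA' : A ⊆ A') (hA : HasKMinorIn G A n) :
    HasKMinorIn G A' n := by
  obtain ⟨B, hBA, hB⟩ := hA
  exact ⟨B, fun i => (hBA i).trans hAA', hB⟩

lemma hasKMinorIn_one {A : Set V} (hA : A.Nonempty) : HasKMinorIn G A 1 := by
  obtain ⟨a, ha⟩ := hA
  exact ⟨fun _ => {a}, fun _ => by simpa using ha, fun _ => by simp,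
    fun i j hij => absurd (Subsingleton.elim i j) hij⟩

lemma HasKMinorIn.succ_of_dominating {D M : Set V} (hDM : D ⊆ M) (hD : (G.induce D).Connected)
    (hdom : ∀ v ∈ M \ D, ∃ d ∈ D, G.Adj v d) (hminor : HasKMinorIn G (M \ D) n) :
    HasKMinorIn G M (n + 1) := by
  obtain ⟨B, hBM, hconn, hpair⟩ := hminor
  have hdisj i : Disjoint D (B i) := Set.disjoint_sdiff_right.mono_right (hBM i)
  have hadj i : ∃ v ∈ B i, ∃ d ∈ D, G.Adj v d := by
    obtain ⟨v, hv⟩ := (hconn i).nonempty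
    exact ⟨v, hv, hdom v (hBM i hv)⟩
  refine ⟨Fin.cons D B, Fin.cases hDM fun i => (hBM i).trans Set.sdiff_subset,
    Fin.cases hD hconn, fun i j hij => ?_⟩
  cases i using Fin.cases with
  | zero =>
    cases j using Fin.cases with
    | zero => exact absurd rfl hij
    | succ j =>
      obtain ⟨v, hv, d, hd, hvd⟩ := hadj j
      exact ⟨hdisj j, d, hd, v, hv, hvd.symm⟩
  | succ i =>
    cases j using Fin.cases with
    | zero => exact ⟨(hdisj i).symm, hadj i⟩
    | succ j => exact hpair (ne_of_apply_ne Fin.succ hij)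

end Minor

section DuchetMeyniel

open Finset

variable {G : SimpleGraph V}

lemma isIndepSet_union {S T : Set V} (hS : G.IsIndepSet S) (hT : G.IsIndepSet T)
    (hST : ∀ u ∈ S, ∀ v ∈ T, ¬ G.Adj u v) : G.IsIndepSet (S ∪ T) :=
  Set.pairwise_union.2 ⟨hS, hT, fun u hu v hv _ =>
    ⟨hST u hu v hv, fun hvu => hST u hu v hv hvu.symm⟩⟩

/-- At least half of the vertices of `D` form an independent set. -/
def IsHalfIndep (G : SimpleGraph V) (D : Finset V) : Prop :=
  ∃ S ⊆ D, G.IsIndepSet (S : Set V) ∧ #D ≤ 2 * #S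

lemma isHalfIndep_singleton (v : V) : IsHalfIndep G {v} :=
  ⟨{v}, Subset.rfl, by simp [IsIndepSet], by simp⟩

lemma IsHalfIndep.insert_insert [DecidableEq V] {D : Finset V} (hD : IsHalfIndep G D) (u : V)
    {v : V} (hv : v ∉ D) (hvD : ∀ d ∈ D, ¬ G.Adj v d) :
    IsHalfIndep G (insert v (insert u D)) := by
  obtain ⟨S, hSD, hS, hcard⟩ := hD
  refine ⟨insert v S, insert_subset_insert v (hSD.trans (subset_insert u D)), ?_, ?_⟩
  · rw [coe_insert, Set.insert_eq]
    exact isIndepSet_union (Set.pairwise_singleton _ _) hS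
      fun _ hw d hd => Set.mem_singleton_iff.1 hw ▸ hvD d (hSD hd)
  · have := card_insert_le v (insert u D)
    have := card_insert_le u D
    rw [card_insert_of_notMem fun hvS => hv (hSD hvS)]
    omega

lemma exists_maximal_connected_isHalfIndep {A : Finset V} (hA : A.Nonempty) :
    ∃ D, Maximal
      (fun D : Finset V => D ⊆ A ∧ (G.induce (D : Set V)).Connected ∧ IsHalfIndep G D) D := by
  obtain ⟨a, ha⟩ := hA
  refine Set.Finite.exists_maximal (A.finite_toSet.finite_subsets.preimage
    coe_injective.injOn |>.subset fun D hD => coe_subset.2 hD.1) ⟨{a}, ?_⟩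
  exact ⟨singleton_subset_iff.2 ha, by rw [coe_singleton]; simp, isHalfIndep_singleton a⟩

lemma exists_isHalfIndep_dominating_closed {A : Finset V} (hA : A.Nonempty) :
    ∃ D M : Finset V, D ⊆ M ∧ M ⊆ A ∧ (G.induce (D : Set V)).Connected ∧ IsHalfIndep G D ∧
      (∀ v ∈ M, v ∉ D → ∃ d ∈ D, G.Adj v d) ∧ ∀ u ∈ M, ∀ v ∈ A, v ∉ M → ¬ G.Adj u v := by
  classical
  obtain ⟨D, ⟨hDA, hconn, hhalf⟩, hmax⟩ := exists_maximal_connected_isHalfIndep (G := G) hA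
  let M := {v ∈ A | v ∈ D ∨ ∃ d ∈ D, G.Adj v d}
  have hDM : D ⊆ M := fun v hv => mem_filter.2 ⟨hDA hv, .inl hv⟩
  refine ⟨D, M, hDM, filter_subset _ _, hconn, hhalf,
    fun v hv hvD => (mem_filter.1 hv).2.resolve_left hvD, fun u hu v hv hvM huv => hvM ?_⟩
  have hvD : v ∉ D := fun hvD => hvM (hDM hvD)
  have hv_nonadj : ∀ d ∈ D, ¬ G.Adj v d :=
    fun d hd hvd => hvM (mem_filter.2 ⟨hv, .inr ⟨d, hd, hvd⟩⟩)
  obtain ⟨huA, huD⟩ := mem_filter.1 hu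
  obtain ⟨d, hd, hud⟩ := huD.resolve_left fun huD => hv_nonadj u huD huv.symm
  have hconn' : (G.induce ((insert v (insert u D) : Finset V) : Set V)).Connected := by
    rw [coe_insert, coe_insert]
    exact induce_insert_connected (induce_insert_connected hconn hd hud)
      (Set.mem_insert u _) huv.symm
  have hle : insert v (insert u D) ≤ D :=
    hmax ⟨insert_subset hv (insert_subset huA hDA), hconn',
      hhalf.insert_insert u hvD hv_nonadj⟩ ((subset_insert u D).trans (subset_insert v _))
  exact absurd (hle (mem_insert_self v _)) hvD

lemma IsHalfIndep.exists_isIndepSet_of_sdiff [DecidableEq V] {D M T : Finset V} {m : ℕ}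
    (hD : IsHalfIndep G D) (hDM : D ⊆ M) (hTM : T ⊆ M \ D) (hT : G.IsIndepSet (T : Set V))
    (hcard : #(M \ D) ≤ 2 * m * #T) :
    ∃ S ⊆ M, G.IsIndepSet (S : Set V) ∧ #M ≤ 2 * (m + 1) * #S := by
  obtain ⟨S, hSD, hS, hSD_card⟩ := hD
  have hM_card : #M ≤ 2 * m * #T + 2 * #S := by
    have := card_sdiff_add_card_eq_card hDM
    omega
  rcases le_total #S #T with hle | hle
  · exact ⟨T, hTM.trans sdiff_subset, hT, by linarith⟩
  · have := Nat.mul_le_mul_left (2 * m) hle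
    exact ⟨S, hSD.trans hDM, hS, by linarith⟩

theorem exists_isIndepSet_of_not_hasKMinorIn (A : Finset V) (m : ℕ)
    (hA : ¬ HasKMinorIn G A (m + 1)) :
    ∃ S ⊆ A, G.IsIndepSet (S : Set V) ∧ #A ≤ 2 * m * #S := by
  classical
  induction A using Finset.strongInduction generalizing m with
  | H A ih =>
    rcases A.eq_empty_or_nonempty with rfl | hne
    · exact ⟨∅, by simp, by simp [IsIndepSet], by simp⟩
    obtain _ | m := m
    · exact absurd (hasKMinorIn_one hne) hA
    obtain ⟨D, M, hDM, hMA, hconn, hhalf, hdom, hclosed⟩ :=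
      exists_isHalfIndep_dominating_closed (G := G) hne
    have hDne : D.Nonempty := Set.nonempty_coe_sort.1 hconn.nonempty
    have hminor_sdiff : ¬ HasKMinorIn G ↑(M \ D) (m + 1) := fun hminor =>
      hA <| .mono (coe_subset.2 hMA) <| .succ_of_dominating (coe_subset.2 hDM) hconn
        (fun v hv => hdom v hv.1 hv.2) (by rwa [coe_sdiff] at hminor)
    obtain ⟨T, hTM, hT, hTcard⟩ :=
      ih (M \ D) ((sdiff_ssubset hDM hDne).trans_subset hMA) m hminor_sdiff
    obtain ⟨S₁, hS₁M, hS₁, hS₁card⟩ := hhalf.exists_isIndepSet_of_sdiff hDM hTM hT hTcard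
    obtain ⟨S₂, hS₂A, hS₂, hS₂card⟩ := ih (A \ M) (sdiff_ssubset hMA (hDne.mono hDM)) (m + 1)
      fun hminor => hA (hminor.mono (coe_subset.2 sdiff_subset))
    have hdisj : Disjoint S₁ S₂ := disjoint_sdiff.mono hS₁M hS₂A
    refine ⟨S₁ ∪ S₂, union_subset (hS₁M.trans hMA) (hS₂A.trans sdiff_subset), ?_, ?_⟩
    · rw [coe_union]
      refine isIndepSet_union hS₁ hS₂ fun u hu v hv => ?_
      obtain ⟨hvA, hvM⟩ := mem_sdiff.1 (hS₂A hv)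
      exact hclosed u (hS₁M hu) v hvA hvM
    · rw [card_union_of_disjoint hdisj, mul_add, ← card_sdiff_add_card_eq_card hMA]
      omega

theorem card_le_two_mul_indepNum_of_not_hasKMinor [Fintype V] {m : ℕ}
    (hG : ¬ HasKMinor G (m + 1)) : Fintype.card V ≤ 2 * m * G.indepNum := by
  obtain ⟨S, -, hS, hcard⟩ :=
    exists_isIndepSet_of_not_hasKMinorIn univ m fun hminor => hG hminor.hasKMinor
  exact hcard.trans (Nat.mul_le_mul_left _ hS.card_le_indepNum)

end DuchetMeyniel

lemma pkgNonAdj_of_not_contactGraph_adj {ι : Type*} {G : SimpleGraph V} {P : ι → PathPkg G}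
    (hdisj : Pairwise fun i j => PkgDisjoint (P i) (P j)) {i j : ι} (hij : i ≠ j)
    (hnadj : ¬ (contactGraph G fun i => pkgSupport (P i)).Adj i j) : PkgNonAdj G (P i) (P j) :=
  fun a ha b hb => ⟨fun hab => hdisj hij a ha (hab ▸ hb),
    fun hab => hnadj ⟨hij, a, ha, b, hb, hab⟩⟩

theorem statement_12 (h k : ℕ) (G : SimpleGraph V) (X Y : Set V)
    (hminor : ¬ HasKMinor G h)
    (P : Fin k → PathPkg G)
    (hP : ∀ i, IsXYPath G X Y (P i))
    (hdisj : Pairwise fun i j => PkgDisjoint (P i) (P j)) :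
    ∃ (n : ℕ) (Q : Fin n → PathPkg G),
      (k : ℝ) / (2 * ((h : ℝ) - 1)) ≤ (n : ℝ) ∧
      (∀ i, IsXYPath G X Y (Q i)) ∧
      Pairwise fun i j => PkgNonAdj G (Q i) (Q j) := by
  obtain _ | m := h
  · exact absurd (hasKMinor_zero G) hminor
  let H := contactGraph G fun i => pkgSupport (P i)
  have hH : ¬ HasKMinor H (m + 1) := fun hHminor => hminor <|
    hHminor.of_contactGraph (fun i => (P i).2.2.connected_induce_support)
      fun i j hij => Set.disjoint_left.2 (hdisj hij)
  obtain ⟨S, hS⟩ := H.exists_isNIndepSet_indepNum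
  let e := S.orderEmbOfFin hS.card_eq
  refine ⟨H.indepNum, P ∘ e, ?_, fun i => hP (e i), fun i j hij => ?_⟩
  · have hk : (k : ℝ) ≤ 2 * m * H.indepNum := by
      exact_mod_cast Fintype.card_fin k ▸ card_le_two_mul_indepNum_of_not_hasKMinor hH
    have hm : 2 * (((m + 1 : ℕ) : ℝ) - 1) = 2 * m := by push_cast; ring
    rw [hm]
    exact div_le_of_le_mul₀ (by positivity) (by positivity) (by linarith)
  · have heij : e i ≠ e j := e.injective.ne hij
    exact pkgNonAdj_of_not_contactGraph_adj hdisj heij <|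
      hS.isIndepSet (S.orderEmbOfFin_mem _ i) (S.orderEmbOfFin_mem _ j) heij
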